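/- Let b ≥ 2 be an integer. There exists a positive real constant C (depending only on b) such that for every integer n ≥ 3, the sum of the digits of Λ_n := lcm(1, 2, …, n) in base b satisfies s_b(Λ_n) > C · log n · log log log n (where log denotes the natural logarithm; for 3 ≤ n ≤ e^e the right-hand side is nonpositive and the inequality is understood accordingly). -/

import Mathlib

/-!
If `b ^ m - 1` divides `N > 0`, then adding up the blocks of `m` digits of `N` gives
`s_b(N) ≥ m * (b - 1)`, so it suffices to find a large `m` with `b ^ m - 1 ∣ Λ_n`.

For odd `m`, every prime power `p ^ k ∣ b ^ m - 1` is at most `(b + 1) ^ φ(m)`: if `d` is the order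
of `b` modulo `p`, lifting the exponent writes `p ^ k = u * w` with `u ∣ Φ_d(b) ≤ (b + 1) ^ φ(d)`
and `w ∣ m / d`, and `(b + 1) * w ≤ (b + 1) ^ φ(w)` because `w` is odd. Hence `b ^ m - 1 ∣ Λ_n` as
soon as `φ(m) ≤ x := log n / log (b + 1)`.

Multiplying the product of the odd primes up to `(log x) / 2` by a suitable odd number gives such
an `m` with `m ≫ x * log log x`, since `∏_{p ≤ y} (1 - 1 / p)⁻¹ ≥ log (y + 1)`.
-/

section DigitSum

variable {b : ℕ} (hb : 1 < b)
include hb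

lemma sum_digits_add_mul {r : ℕ} (hr : r < b) (k : ℕ) :
    (Nat.digits b (r + b * k)).sum = r + (Nat.digits b k).sum := by
  rcases Nat.eq_zero_or_pos (r + b * k) with h | h
  · obtain ⟨rfl, hk⟩ := Nat.add_eq_zero_iff.1 h
    obtain rfl := (Nat.mul_eq_zero.1 hk).resolve_left (by lia)
    simp
  · rw [Nat.digits_def' hb h, List.sum_cons, Nat.add_mul_mod_self_left, Nat.mod_eq_of_lt hr,
      Nat.add_mul_div_left _ _ (by lia), Nat.div_eq_of_lt hr, zero_add]

lemma sum_digits_eq_mod_add_div (n : ℕ) :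
    (Nat.digits b n).sum = n % b + (Nat.digits b (n / b)).sum := by
  conv_lhs => rw [← Nat.mod_add_div n b]
  exact sum_digits_add_mul hb (Nat.mod_lt _ (by lia)) _

lemma sum_digits_succ_le (n : ℕ) :
    (Nat.digits b (n + 1)).sum ≤ (Nat.digits b n).sum + 1 := by
  induction n using Nat.strong_induction_on with
  | _ n ih =>
    have hmod : n % b < b := Nat.mod_lt _ (by lia)
    have hn := Nat.mod_add_div n b
    rw [sum_digits_eq_mod_add_div hb n]
    by_cases hcarry : n % b + 1 < b
    · rw [show n + 1 = n % b + 1 + b * (n / b) by lia, sum_digits_add_mul hb hcarry]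
      lia
    · have hn_pos : 0 < n := (by lia : 0 < n % b).trans_le (Nat.mod_le n b)
      have hlt : n / b < n := Nat.div_lt_self hn_pos hb
      rw [show n + 1 = 0 + b * (n / b + 1) by lia, sum_digits_add_mul hb (by lia)]
      have := ih _ hlt
      lia

lemma sum_digits_add_le_add_sum_digits (k n : ℕ) :
    (Nat.digits b (k + n)).sum ≤ k + (Nat.digits b n).sum := by
  induction k with
  | zero => simp
  | succ k ih =>
    rw [Nat.add_right_comm]
    have := sum_digits_succ_le hb (k + n)
    lia

lemma sum_digits_add_le (x y : ℕ) :
    (Nat.digits b (x + y)).sum ≤ (Nat.digits b x).sum + (Nat.digits b y).sum := by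
  induction x using Nat.strong_induction_on generalizing y with
  | _ x ih =>
    rcases Nat.eq_zero_or_pos x with rfl | hx
    · simp
    have hxy : x + y = x % b + (y % b + b * (x / b + y / b)) := by
      have := Nat.mod_add_div x b
      have := Nat.mod_add_div y b
      lia
    calc (Nat.digits b (x + y)).sum
        ≤ x % b + (y % b + (Nat.digits b (x / b + y / b)).sum) := by
          rw [hxy, ← sum_digits_add_mul hb (Nat.mod_lt y (by lia))]
          exact sum_digits_add_le_add_sum_digits hb _ _
      _ ≤ x % b + (y % b + ((Nat.digits b (x / b)).sum + (Nat.digits b (y / b)).sum)) := by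
          gcongr
          exact ih _ (Nat.div_lt_self hx hb) _
      _ = (Nat.digits b x).sum + (Nat.digits b y).sum := by
          rw [sum_digits_eq_mod_add_div hb x, sum_digits_eq_mod_add_div hb y]
          ring

lemma sum_digits_mod_pow_add_sum_digits_div_pow (m n : ℕ) :
    (Nat.digits b (n % b ^ m)).sum + (Nat.digits b (n / b ^ m)).sum = (Nat.digits b n).sum := by
  induction m generalizing n with
  | zero => simp [Nat.mod_one]
  | succ m ih =>
    rw [sum_digits_eq_mod_add_div hb (n % b ^ (m + 1)), pow_succ', Nat.mod_mul_right_mod,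
      Nat.mod_mul_right_div_self, ← Nat.div_div_eq_div_mul, add_assoc, ih,
      ← sum_digits_eq_mod_add_div hb]

lemma sum_digits_pow_sub_one (m : ℕ) : (Nat.digits b (b ^ m - 1)).sum = m * (b - 1) := by
  induction m with
  | zero => simp
  | succ m ih =>
    have hpos : 0 < b ^ m := by positivity
    have hsplit : b ^ (m + 1) - 1 = (b - 1) + b * (b ^ m - 1) := by
      rw [pow_succ', Nat.mul_sub]
      have := Nat.le_mul_of_pos_right b hpos
      lia
    rw [hsplit, sum_digits_add_mul hb (by lia), ih]
    ring

lemma mul_sub_one_le_sum_digits_of_dvd {m n : ℕ} (hn : 0 < n) (hdvd : b ^ m - 1 ∣ n) :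
    m * (b - 1) ≤ (Nat.digits b n).sum := by
  induction n using Nat.strong_induction_on with
  | _ n ih =>
    rcases Nat.lt_or_ge n (b ^ m) with hlt | hge
    · have hle := Nat.le_of_dvd hn hdvd
      rw [← sum_digits_pow_sub_one hb, show n = b ^ m - 1 by lia]
    -- Folding the top digits onto the bottom ones preserves `n` modulo `b ^ m - 1`.
    have hpos : 0 < b ^ m - 1 := Nat.pos_of_dvd_of_pos hdvd hn
    have hq : 0 < n / b ^ m := Nat.div_pos hge (by lia)
    have hfold : n = (b ^ m - 1) * (n / b ^ m) + (n % b ^ m + n / b ^ m) := by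
      obtain ⟨c, hc⟩ : ∃ c, b ^ m = c + 1 := ⟨b ^ m - 1, by lia⟩
      conv_lhs => rw [← Nat.mod_add_div n (b ^ m)]
      rw [hc, Nat.add_sub_cancel]
      ring
    have hdvd' : b ^ m - 1 ∣ n % b ^ m + n / b ^ m := by
      rw [hfold] at hdvd
      exact (Nat.dvd_add_right (dvd_mul_right _ _)).1 hdvd
    have hdecr := Nat.mul_pos hpos hq
    calc m * (b - 1) ≤ (Nat.digits b (n % b ^ m + n / b ^ m)).sum :=
          ih _ (by lia) (Nat.add_pos_right _ hq) hdvd'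
      _ ≤ (Nat.digits b (n % b ^ m)).sum + (Nat.digits b (n / b ^ m)).sum :=
          sum_digits_add_le hb _ _
      _ = (Nat.digits b n).sum := sum_digits_mod_pow_add_sum_digits_div_pow hb m n

end DigitSum

lemma sum_digits_pos (b : ℕ) {n : ℕ} (hn : n ≠ 0) : 0 < (Nat.digits b n).sum :=
  List.sum_pos_iff_exists_pos_nat.2 ⟨_, List.getLast_mem (Nat.digits_ne_nil_iff_ne_zero.2 hn),
    Nat.pos_of_ne_zero (Nat.getLast_digit_ne_zero b hn)⟩

lemma le_pow_sub_two {c n : ℕ} (hc : 3 ≤ c) (hn : 3 ≤ n) : n ≤ c ^ (n - 2) := by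
  obtain ⟨k, rfl⟩ := Nat.exists_eq_add_of_le hn
  have hk : k + 1 ≤ c ^ k := Nat.lt_pow_self (by lia)
  calc 3 + k ≤ (k + 1) * 3 := by lia
    _ ≤ c ^ k * c := Nat.mul_le_mul hk hc
    _ = c ^ (3 + k - 2) := by rw [← pow_succ, show 3 + k - 2 = k + 1 by lia]

lemma mul_le_pow_totient {c n : ℕ} (hc : 3 ≤ c) (hn : Odd n) : c * n ≤ c ^ n.totient := by
  induction n using induction_on_primes with
  | zero => simp at hn
  | one => simp
  | prime_mul p n hp ih =>
    obtain ⟨hp_odd, hn⟩ := Nat.odd_mul.1 hn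
    have hp3 : 3 ≤ p := (Nat.Prime.odd_iff hp).1 hp_odd
    have htot_pos : 0 < n.totient := Nat.totient_pos.2 hn.pos
    have hexp : p - 2 + n.totient ≤ (p * n).totient := by
      refine le_trans ?_ (Nat.totient_super_multiplicative p n)
      rw [Nat.totient_prime hp, show p - 1 = p - 2 + 1 by lia, add_one_mul]
      exact Nat.add_le_add_right (Nat.le_mul_of_pos_right _ htot_pos) _
    calc c * (p * n) = p * (c * n) := by ring
      _ ≤ c ^ (p - 2) * c ^ n.totient := Nat.mul_le_mul (le_pow_sub_two hc hp3) (ih hn)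
      _ ≤ c ^ (p * n).totient := by
        rw [← pow_add]
        exact Nat.pow_le_pow_right (by lia) hexp

lemma totient_mul_le_totient_mul (m n : ℕ) : (m * n).totient ≤ m.totient * n := by
  induction n using induction_on_primes with
  | zero => simp
  | one => simp
  | prime_mul p n hp ih =>
    rw [show m * (p * n) = p * (m * n) by ring]
    have hstep : (p * (m * n)).totient ≤ p * (m * n).totient := by
      by_cases h : p ∣ m * n
      · exact (Nat.totient_mul_of_prime_of_dvd hp h).le
      · rw [Nat.totient_mul_of_prime_of_not_dvd hp h]
        exact Nat.mul_le_mul_right _ (Nat.sub_le _ _)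
    calc (p * (m * n)).totient ≤ p * (m.totient * n) := hstep.trans (Nat.mul_le_mul_left p ih)
      _ = m.totient * (p * n) := by ring

open Polynomial in
lemma prime_pow_dvd_eval_cyclotomic_orderOf {p : ℕ} (hp : p.Prime) {b : ℤ} {k : ℕ}
    (hd : 0 < orderOf (b : ZMod p)) (hdvd : (p : ℤ) ^ k ∣ b ^ orderOf (b : ZMod p) - 1) :
    (p : ℤ) ^ k ∣ (cyclotomic (orderOf (b : ZMod p)) ℤ).eval b := by
  have hpZ : Prime (p : ℤ) := Nat.prime_iff_prime_int.1 hp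
  set d := orderOf (b : ZMod p)
  have hproper : ∀ i ∈ d.properDivisors, ¬ (p : ℤ) ∣ (cyclotomic i ℤ).eval b := by
    intro i hi hpi
    have hi_pos := Nat.pos_of_mem_properDivisors hi
    have hroot : (p : ℤ) ∣ b ^ i - 1 := by
      have := hpi.trans (eval_dvd (x := b) (cyclotomic.dvd_X_pow_sub_one i ℤ))
      simpa using this
    have hpow : (b : ZMod p) ^ i = 1 := by
      rw [← sub_eq_zero]
      exact_mod_cast (ZMod.intCast_zmod_eq_zero_iff_dvd _ p).2 hroot
    exact (Nat.mem_properDivisors.1 hi).2.not_ge (orderOf_le_of_pow_eq_one hi_pos hpow)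
  have hprod : b ^ d - 1 =
      (cyclotomic d ℤ).eval b * ∏ i ∈ d.properDivisors, (cyclotomic i ℤ).eval b := by
    have := congrArg (eval b) (prod_cyclotomic_eq_X_pow_sub_one hd ℤ)
    rw [← Nat.cons_self_properDivisors hd.ne', Finset.prod_cons, eval_mul, eval_prod] at this
    simpa using this.symm
  rw [hprod] at hdvd
  refine IsCoprime.dvd_of_dvd_mul_right (IsCoprime.pow_left (IsCoprime.prod_right ?_)) hdvd
  exact fun i hi => (Prime.coprime_iff_not_dvd hpZ).2 (hproper i hi)

open Polynomial in
lemma eval_cyclotomic_le_add_one_pow_totient {b : ℤ} (hb : 1 < b) (n : ℕ) :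
    (cyclotomic n ℤ).eval b ≤ (b + 1) ^ n.totient := by
  have h := cyclotomic_eval_le_add_one_pow_totient (q := (b : ℝ)) (by exact_mod_cast hb) n
  rw [← map_cyclotomic_int n ℝ, eval_intCast_map, eq_intCast] at h
  exact_mod_cast h

lemma prime_pow_le_of_dvd_pow_orderOf_sub_one {p b k : ℕ} (hp : p.Prime) (hb : 1 < b)
    (hd : 0 < orderOf (b : ZMod p)) (hdvd : p ^ k ∣ b ^ orderOf (b : ZMod p) - 1) :
    p ^ k ≤ (b + 1) ^ (orderOf (b : ZMod p)).totient := by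
  have hbZ : (1 : ℤ) < b := by exact_mod_cast hb
  have hcast : ((b : ℤ) : ZMod p) = b := Int.cast_natCast b
  have hdvdZ : (p : ℤ) ^ k ∣ (b : ℤ) ^ orderOf (b : ZMod p) - 1 := by
    have := Int.natCast_dvd_natCast.2 hdvd
    rw [Nat.cast_sub (Nat.one_le_pow _ _ (by lia))] at this
    exact_mod_cast this
  have hcyc : (p : ℤ) ^ k ∣ (Polynomial.cyclotomic (orderOf (b : ZMod p)) ℤ).eval (b : ℤ) := by
    have := prime_pow_dvd_eval_cyclotomic_orderOf (b := (b : ℤ)) hp (hcast ▸ hd) (hcast ▸ hdvdZ)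
    rwa [hcast] at this
  have := (Int.le_of_dvd (Polynomial.cyclotomic_pos' _ hbZ) hcyc).trans
    (eval_cyclotomic_le_add_one_pow_totient hbZ _)
  exact_mod_cast this

lemma emultiplicity_pow_sub_one_of_odd {p e : ℕ} (hp : p.Prime) (he : Odd e) {x : ℤ}
    (hpx : (p : ℤ) ∣ x - 1) :
    emultiplicity (p : ℤ) (x ^ e - 1) = emultiplicity (p : ℤ) ((x - 1) * e) := by
  have hpZ := Nat.prime_iff_prime_int.1 hp
  have hpx' : ¬ (p : ℤ) ∣ x := fun h => hpZ.not_dvd_one ((dvd_sub_right h).1 hpx)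
  rw [emultiplicity_mul hpZ, ← one_pow e]
  rcases hp.eq_two_or_odd' with rfl | hp_odd
  · have h2 : ¬ ((2 : ℕ) : ℤ) ∣ e := by exact_mod_cast he.not_two_dvd_nat
    rw [emultiplicity_pow_sub_pow_of_prime hpZ (by simpa using hpx) hpx' h2,
      emultiplicity_eq_zero.2 h2, add_zero, one_pow]
  · rw [Int.emultiplicity_pow_sub_pow hp hp_odd (by simpa using hpx) hpx',
      Int.natCast_emultiplicity, one_pow]

lemma prime_pow_dvd_sub_one_mul_of_dvd_pow_sub_one {p x e k : ℕ} (hp : p.Prime) (he : Odd e)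
    (hx : 0 < x) (hpx : p ∣ x - 1) (hdvd : p ^ k ∣ x ^ e - 1) : p ^ k ∣ (x - 1) * e := by
  have hpxZ : (p : ℤ) ∣ x - 1 := by
    rw [← Nat.cast_pred hx]
    exact_mod_cast hpx
  have hlift := emultiplicity_pow_sub_one_of_odd hp he hpxZ
  rw [← Int.natCast_dvd_natCast] at hdvd ⊢
  rw [Nat.cast_pred (by positivity)] at hdvd
  push_cast [Nat.cast_pred hx] at hdvd ⊢
  rw [pow_dvd_iff_le_emultiplicity] at hdvd ⊢
  exact hdvd.trans_eq hlift

lemma prime_pow_le_of_dvd_pow_sub_one {b m p k : ℕ} (hb : 1 < b) (hm : Odd m) (hp : p.Prime)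
    (hdvd : p ^ k ∣ b ^ m - 1) : p ^ k ≤ (b + 1) ^ m.totient := by
  rcases Nat.eq_zero_or_pos k with rfl | hk
  · simpa using Nat.one_le_pow _ _ (by lia)
  have hmod : ∀ i, p ∣ b ^ i - 1 ↔ (b : ZMod p) ^ i = 1 := by
    intro i
    rw [← ZMod.natCast_eq_zero_iff, Nat.cast_sub (Nat.one_le_pow _ _ (by lia)), sub_eq_zero]
    push_cast
    rfl
  have hpow : (b : ZMod p) ^ m = 1 := (hmod m).1 ((dvd_pow_self p hk.ne').trans hdvd)
  have hd_pos : 0 < orderOf (b : ZMod p) :=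
    orderOf_pos_iff.2 (isOfFinOrder_iff_pow_eq_one.2 ⟨m, hm.pos, hpow⟩)
  obtain ⟨e, he⟩ := orderOf_dvd_of_pow_eq_one hpow
  have hd := (hmod _).2 (pow_orderOf_eq_one (b : ZMod p))
  set d := orderOf (b : ZMod p)
  have he_odd : Odd e := (Nat.odd_mul.1 (he ▸ hm)).2
  rw [he, pow_mul] at hdvd
  obtain ⟨u, w, hu, hw, huw⟩ := (Nat.dvd_mul).1
    (prime_pow_dvd_sub_one_mul_of_dvd_pow_sub_one hp he_odd (by positivity) hd hdvd)
  have hu_le : u ≤ (b + 1) ^ d.totient := by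
    obtain ⟨i, -, rfl⟩ := (Nat.dvd_prime_pow hp).1 (huw ▸ dvd_mul_right u w)
    exact prime_pow_le_of_dvd_pow_orderOf_sub_one hp hb hd_pos hu
  have hw_odd : Odd w := he_odd.of_dvd_nat hw
  have htot : d.totient + w.totient ≤ m.totient + 1 := by
    have hdw : d.totient * w.totient ≤ m.totient :=
      (Nat.totient_super_multiplicative d w).trans <| Nat.le_of_dvd (Nat.totient_pos.2 hm.pos)
        (Nat.totient_dvd_of_dvd (he ▸ mul_dvd_mul_left d hw))
    have := Nat.totient_pos.2 hd_pos
    have := Nat.totient_pos.2 hw_odd.pos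
    nlinarith
  refine Nat.le_of_mul_le_mul_left (?_ : (b + 1) * p ^ k ≤ (b + 1) * _) b.succ_pos
  calc (b + 1) * p ^ k = u * ((b + 1) * w) := by rw [← huw]; ring
    _ ≤ (b + 1) ^ d.totient * (b + 1) ^ w.totient :=
      Nat.mul_le_mul hu_le (mul_le_pow_totient (by lia) hw_odd)
    _ ≤ (b + 1) ^ (m.totient + 1) := by
      rw [← pow_add]
      exact Nat.pow_le_pow_right b.succ_pos htot
    _ = (b + 1) * (b + 1) ^ m.totient := pow_succ' _ _

lemma pow_sub_one_dvd_lcmUpto {b m n : ℕ} (hb : 1 < b) (hm : Odd m)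
    (hn : (b + 1) ^ m.totient ≤ n) : b ^ m - 1 ∣ Nat.lcmUpto n := by
  rw [Nat.dvd_iff_prime_pow_dvd_dvd]
  intro p k hp hdvd
  exact Finset.dvd_lcm (f := id) (Finset.mem_Icc.2
    ⟨Nat.one_le_pow _ _ hp.pos, (prime_pow_le_of_dvd_pow_sub_one hb hm hp hdvd).trans hn⟩)

lemma log_add_one_le_prod_primesLE (N : ℕ) :
    Real.log (N + 1) ≤ ∏ p ∈ Nat.primesLE N, (1 - (p : ℝ)⁻¹)⁻¹ := by
  let f : ℕ →* ℝ := (invMonoidHom (α := ℝ)).comp (Nat.castRingHom ℝ : ℕ →* ℝ)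
  have hf_lt {p : ℕ} (hp : p.Prime) : ‖f p‖ < 1 := by
    change ‖(p : ℝ)⁻¹‖ < 1
    rw [norm_inv, Real.norm_natCast]
    exact inv_lt_one_of_one_lt₀ (by exact_mod_cast hp.one_lt)
  have hsum : HasSum (fun i : (N + 1).smoothNumbers => (i : ℝ)⁻¹)
      (∏ p ∈ Nat.primesLE N, (1 - (p : ℝ)⁻¹)⁻¹) :=
    (EulerProduct.summable_and_hasSum_smoothNumbers_prod_primesBelow_geometric hf_lt (N + 1)).2
  have hsmooth : ∀ i ∈ Finset.Icc 1 N, i ∈ (N + 1).smoothNumbers := fun i hi =>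
    Nat.mem_smoothNumbers_of_lt (Finset.mem_Icc.1 hi).1 (Nat.lt_succ_of_le (Finset.mem_Icc.1 hi).2)
  calc Real.log (N + 1) ≤ harmonic N := by exact_mod_cast log_add_one_le_harmonic N
    _ = ∑ i ∈ (Finset.Icc 1 N).subtype (· ∈ (N + 1).smoothNumbers), (i : ℝ)⁻¹ := by
      rw [Finset.sum_subtype_of_mem (fun i : ℕ => (i : ℝ)⁻¹) hsmooth, harmonic_eq_sum_Icc]
      push_cast
      rfl
    _ ≤ _ := sum_le_hasSum _ (fun i _ => by positivity) hsum

lemma log_mul_totient_primorial_le (y : ℕ) :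
    Real.log (y + 1) * (primorial y).totient ≤ primorial y := by
  set A : ℝ := ∏ p ∈ Nat.primesLE y, (1 - (p : ℝ)⁻¹) with hA
  have hA_pos : 0 < A := Finset.prod_pos fun p hp => sub_pos.2 <|
    inv_lt_one_of_one_lt₀ (by exact_mod_cast (Nat.prime_of_mem_primesLE hp).one_lt)
  have htot : ((primorial y).totient : ℝ) = primorial y * A := by
    have := Nat.totient_eq_mul_prod_factors (primorial y)
    rw [primeFactors_primorial] at this
    have := congrArg (Rat.cast : ℚ → ℝ) this
    push_cast at this
    exact this
  calc Real.log (y + 1) * (primorial y).totient ≤ A⁻¹ * (primorial y * A) := by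
        rw [htot, hA, ← Finset.prod_inv_distrib]
        gcongr
        exact log_add_one_le_prod_primesLE y
    _ = primorial y := by field_simp

lemma exists_odd_log_mul_totient_le {y : ℕ} (hy : 2 ≤ y) :
    ∃ r : ℕ, Odd r ∧ r ≤ 4 ^ y ∧ Real.log (y + 1) * r.totient ≤ 2 * r := by
  obtain ⟨r, hr⟩ := Nat.prime_two.dvd_primorial_iff.2 hy
  have hr_odd : Odd r := by
    rw [← Nat.not_even_iff_odd, even_iff_two_dvd]
    intro h
    have := squarefree_primorial y 2 (hr ▸ mul_dvd_mul_left 2 h)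
    simp at this
  refine ⟨r, hr_odd, ?_, ?_⟩
  · have := primorial_le_four_pow y
    lia
  · have := log_mul_totient_primorial_le y
    rw [hr, Nat.totient_two_mul_of_odd hr_odd] at this
    exact_mod_cast this

lemma exists_odd_le_le_three_mul {x : ℝ} (hx : 1 ≤ x) : ∃ t : ℕ, Odd t ∧ t ≤ x ∧ x ≤ 3 * t := by
  have hq : 1 ≤ ⌊x⌋₊ := Nat.le_floor (by simpa using hx)
  obtain ⟨t, ht_odd, ht_le, hle_t⟩ : ∃ t, Odd t ∧ t ≤ ⌊x⌋₊ ∧ ⌊x⌋₊ + 1 ≤ 3 * t := by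
    rcases Nat.even_or_odd ⌊x⌋₊ with heven | hodd
    · have hne : ⌊x⌋₊ ≠ 1 := by
        intro h
        simp [h] at heven
      exact ⟨⌊x⌋₊ - 1, Nat.Even.sub_odd hq heven odd_one, by lia, by lia⟩
    · exact ⟨⌊x⌋₊, hodd, le_rfl, by lia⟩
  refine ⟨t, ht_odd, (Nat.cast_le.2 ht_le).trans (Nat.floor_le (by positivity)), ?_⟩
  calc x ≤ ⌊x⌋₊ + 1 := (Nat.lt_floor_add_one x).le
    _ ≤ 3 * t := by exact_mod_cast hle_t

lemma exists_odd_totient_le_mul_log_le {x : ℝ} {y : ℕ} (hy : 2 ≤ y) (hxy : 4 ^ y ≤ x) :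
    ∃ m : ℕ, Odd m ∧ m.totient ≤ x ∧ x * Real.log (y + 1) ≤ 6 * m := by
  obtain ⟨r, hr_odd, hr_le, hr_log⟩ := exists_odd_log_mul_totient_le hy
  have htot_pos : (0 : ℝ) < r.totient := by exact_mod_cast Nat.totient_pos.2 hr_odd.pos
  have htot_le : (r.totient : ℝ) ≤ x :=
    le_trans (by exact_mod_cast (Nat.totient_le r).trans hr_le) hxy
  obtain ⟨t, ht_odd, ht_le, hle_t⟩ := exists_odd_le_le_three_mul ((one_le_div htot_pos).2 htot_le)
  rw [le_div_iff₀ htot_pos] at ht_le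
  rw [div_le_iff₀ htot_pos] at hle_t
  refine ⟨r * t, hr_odd.mul ht_odd, ?_, ?_⟩
  · calc ((r * t).totient : ℝ) ≤ r.totient * t := by exact_mod_cast totient_mul_le_totient_mul r t
      _ ≤ x := by linarith
  · have hlog : 0 ≤ Real.log (y + 1) := Real.log_nonneg (by simp)
    calc x * Real.log (y + 1) ≤ 3 * t * r.totient * Real.log (y + 1) := by gcongr
      _ = 3 * t * (Real.log (y + 1) * r.totient) := by ring
      _ ≤ 3 * t * (2 * r) := by gcongr
      _ = 6 * (r * t : ℕ) := by push_cast; ring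

section Asymptotics

open Filter Topology

lemma eventually_log_div_two_le_log_div {K : ℝ} (hK : 0 < K) :
    ∀ᶠ x in atTop, Real.log x / 2 ≤ Real.log (x / K) := by
  filter_upwards [Real.tendsto_log_atTop.eventually_ge_atTop (2 * Real.log K),
    eventually_gt_atTop 0] with x hlog hx
  rw [Real.log_div hx.ne' hK.ne']
  linarith

lemma eventually_log_log_div_two_le_log_log_div {K : ℝ} (hK : 0 < K) :
    ∀ᶠ x in atTop, Real.log (Real.log x) / 2 ≤ Real.log (Real.log (x / K)) := by
  filter_upwards [eventually_log_div_two_le_log_div hK,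
    Real.tendsto_log_atTop.eventually (eventually_log_div_two_le_log_div two_pos),
    Real.tendsto_log_atTop.eventually_gt_atTop 0] with x hx hlog hpos
  exact hlog.trans (Real.log_le_log (by positivity) hx)

lemma eventually_exists_odd_totient_le :
    ∀ᶠ x : ℝ in atTop, ∃ m : ℕ, Odd m ∧ m.totient ≤ x ∧ x * Real.log (Real.log x) ≤ 12 * m := by
  filter_upwards [Real.tendsto_log_atTop.eventually (eventually_log_div_two_le_log_div two_pos),
    Real.tendsto_log_atTop.eventually_ge_atTop 4, eventually_gt_atTop 0] with x hloglog hlog hx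
  set y := ⌊Real.log x / 2⌋₊
  have hy : 2 ≤ y := Nat.le_floor (by norm_num; linarith)
  have hy_le : (y : ℝ) ≤ Real.log x / 2 := Nat.floor_le (by linarith)
  have hxy : 4 ^ y ≤ x := by
    have hlog4 : Real.log 4 ≤ 2 := by
      rw [show (4 : ℝ) = 2 ^ 2 by norm_num, Real.log_pow]
      have := Real.log_two_lt_d9
      norm_num
      linarith
    rw [← Real.log_le_log_iff (by positivity) hx, Real.log_pow]
    nlinarith
  obtain ⟨m, hm_odd, htot, hm⟩ := exists_odd_totient_le_mul_log_le hy hxy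
  have hlog_y : Real.log (Real.log x) / 2 ≤ Real.log (y + 1) :=
    hloglog.trans (Real.log_le_log (by linarith) (Nat.lt_floor_add_one _).le)
  refine ⟨m, hm_odd, htot, ?_⟩
  have := mul_le_mul_of_nonneg_left hlog_y hx.le
  linarith

lemma eventually_le_sum_digits_lcmUpto {b : ℕ} (hb : 1 < b) : ∀ᶠ n : ℕ in atTop,
    1 / (24 * Real.log (b + 1)) * (Real.log n * Real.log (Real.log (Real.log n))) ≤
      (Nat.digits b (Nat.lcmUpto n)).sum := by
  set K := Real.log (b + 1)
  have hK : 0 < K := Real.log_pos (by exact_mod_cast Nat.succ_lt_succ (by lia))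
  have hlog : Tendsto (fun n : ℕ => Real.log n) atTop atTop :=
    Real.tendsto_log_atTop.comp tendsto_natCast_atTop_atTop
  filter_upwards [hlog.eventually (eventually_log_log_div_two_le_log_log_div hK),
    (hlog.atTop_div_const hK).eventually eventually_exists_odd_totient_le,
    eventually_gt_atTop 0] with n hloglog hexists hn
  obtain ⟨m, hm_odd, htot, hm⟩ := hexists
  have hpow : (b + 1) ^ m.totient ≤ n := by
    rw [le_div_iff₀ hK, ← Real.log_pow, Real.log_le_log_iff (by positivity) (by positivity)] at htot
    exact_mod_cast htot
  have hsum : (m : ℝ) ≤ (Nat.digits b (Nat.lcmUpto n)).sum := by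
    exact_mod_cast (Nat.le_mul_of_pos_right m (by lia)).trans
      (mul_sub_one_le_sum_digits_of_dvd hb (Nat.lcmUpto_pos n)
        (pow_sub_one_dvd_lcmUpto hb hm_odd hpow))
  have : 0 ≤ Real.log n / K := div_nonneg (Real.log_natCast_nonneg n) hK.le
  calc 1 / (24 * K) * (Real.log n * Real.log (Real.log (Real.log n)))
      = Real.log n / K * (Real.log (Real.log (Real.log n)) / 2) / 12 := by field_simp; ring
    _ ≤ Real.log n / K * Real.log (Real.log (Real.log n / K)) / 12 := by gcongr
    _ ≤ m := by linarith
    _ ≤ _ := hsum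

lemma exists_pos_forall_mul_lt {ι : Type*} {f g : ι → ℝ} (hf : ∀ i, 0 < f i) {c : ℝ} (hc : 0 < c)
    (h : ∀ᶠ i in cofinite, c * g i ≤ f i) : ∃ C, 0 < C ∧ ∀ i, C * g i < f i := by
  have hsmall : ∀ᶠ C in 𝓝[>] (0 : ℝ), ∀ i ∈ {i | ¬ c * g i ≤ f i}, C * g i < f i := by
    refine (eventually_all_finite h).2 fun i _ => ?_
    have : Tendsto (fun C => C * g i) (𝓝[>] 0) (𝓝 (0 * g i)) :=
      ((continuous_mul_const (g i)).tendsto 0).mono_left nhdsWithin_le_nhds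
    rw [zero_mul] at this
    exact this.eventually_lt_const (hf i)
  obtain ⟨C, hexc, hC, hCc⟩ := (hsmall.and (Ioo_mem_nhdsGT hc)).exists
  refine ⟨C, hC, fun i => ?_⟩
  by_cases hi : c * g i ≤ f i
  · rcases le_or_gt (g i) 0 with hg | hg
    · exact (mul_nonpos_of_nonneg_of_nonpos hC.le hg).trans_lt (hf i)
    · exact (mul_lt_mul_of_pos_right hCc hg).trans_le hi
  · exact hexc i hi

end Asymptotics

/-- For each integer `b ≥ 2` there is a constant `C > 0` (depending only on `b`)
such that `s_b(lcm(1,…,n)) > C * log n * log log log n` for every integer `n ≥ 3`. -/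
theorem sum_digits_lcm_gt (b : ℕ) (hb : 2 ≤ b) :
    ∃ C : ℝ, 0 < C ∧ ∀ n : ℕ, 3 ≤ n →
      C * Real.log n * Real.log (Real.log (Real.log n)) <
        ((Nat.digits b ((Finset.Icc 1 n).lcm id)).sum : ℝ) := by
  have hpos (n : ℕ) : (0 : ℝ) < (Nat.digits b (Nat.lcmUpto n)).sum := by
    exact_mod_cast sum_digits_pos b (Nat.lcmUpto_ne_zero n)
  have hK : 0 < Real.log (b + 1) := Real.log_pos (by exact_mod_cast Nat.succ_lt_succ (by lia))
  have hlarge := eventually_le_sum_digits_lcmUpto hb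
  rw [← Nat.cofinite_eq_atTop] at hlarge
  obtain ⟨C, hC, h⟩ := exists_pos_forall_mul_lt hpos (by positivity) hlarge
  refine ⟨C, hC, fun n _ => ?_⟩
  rw [mul_assoc]
  exact h n
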